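/- The Frenet frame {T_n, N_n, B_n} of the normal indicatrix x_n = n satisfies, for all s: T_n = (−t + f·b)/√(1 + f²), N_n = (σ·(f·t + b)/√(1 + f²) − n)/√(1 + σ²), and B_n = ((f·t + b)/√(1 + f²) + σ·n)/√(1 + σ²), where f = τ/κ and σ = f'/(κ·(1 + f²)^{3/2}). (This is Theorem 4.5 on the multiplicative Frenet vectors of the multiplicative normal indicatrix.) -/

import Mathlib

/-! The three Frenet equations give `n' = κ (-t + f b)`, of norm `κ g` with `g = √(1 + f²)`, which
is the formula for `T_n`. Put `u = (f t + b) / g`, so that `(T_n, u, n)` is an orthonormal frame.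
Differentiating `T_n = (-t + f b) / g`, the `t` and `b` components combine to
`f' / (1 + f²) • u = κ g σ • u`, while `t' = κ n` and `b' = -τ n` contribute `-κ g • n`; hence
`T_n' = κ g (σ u - n)`, which has norm `κ g √(1 + σ²)`. This gives `N_n`, and `B_n` follows from
`T_n × u = n` and `T_n × n = -u`.

The Frenet equations are derived from the vector triple product identity
`a × (v × w) = ⟪a, w⟫ v - ⟪a, v⟫ w`, which makes `t, n, t × n` an orthonormal basis. -/

open scoped RealInnerProductSpace Topology

/-- The cross product on `ℝ³` (as `EuclideanSpace ℝ (Fin 3)`). -/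
noncomputable def cross3 (u v : EuclideanSpace ℝ (Fin 3)) : EuclideanSpace ℝ (Fin 3) :=
  (WithLp.equiv 2 (Fin 3 → ℝ)).symm
    ![u 1 * v 2 - u 2 * v 1, u 2 * v 0 - u 0 * v 2, u 0 * v 1 - u 1 * v 0]

/-- `ℝ³` with the Euclidean norm. -/
local notation "E3" => EuclideanSpace ℝ (Fin 3)

lemma inner_eq3 (u v : E3) : ⟪u, v⟫ = u 0 * v 0 + u 1 * v 1 + u 2 * v 2 := by
  simp [PiLp.inner_apply, Fin.sum_univ_three]
  ring

lemma cross3_add_left (u v w : E3) : cross3 (u + v) w = cross3 u w + cross3 v w := by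
  ext i; fin_cases i <;> simp [cross3] <;> ring

lemma cross3_add_right (u v w : E3) : cross3 u (v + w) = cross3 u v + cross3 u w := by
  ext i; fin_cases i <;> simp [cross3] <;> ring

lemma cross3_smul_left (c : ℝ) (u v : E3) : cross3 (c • u) v = c • cross3 u v := by
  ext i; fin_cases i <;> simp [cross3] <;> ring

lemma cross3_smul_right (c : ℝ) (u v : E3) : cross3 u (c • v) = c • cross3 u v := by
  ext i; fin_cases i <;> simp [cross3] <;> ring

lemma cross3_self (u : E3) : cross3 u u = 0 := by
  ext i; fin_cases i <;> simp [cross3] <;> ring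

lemma cross3_anticomm (u v : E3) : cross3 u v = -cross3 v u := by
  ext i; fin_cases i <;> simp [cross3] <;> ring

/-- The vector triple product identity. -/
lemma cross3_cross3 (u v w : E3) : cross3 u (cross3 v w) = ⟪u, w⟫ • v - ⟪u, v⟫ • w := by
  ext i; fin_cases i <;> simp [cross3, inner_eq3] <;> ring

lemma inner_cross3_left (u v : E3) : ⟪u, cross3 u v⟫ = 0 := by
  simp [cross3, inner_eq3]; ring

lemma inner_cross3_right (u v : E3) : ⟪v, cross3 u v⟫ = 0 := by
  simp [cross3, inner_eq3]; ring

/-- Lagrange's identity. -/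
lemma inner_cross3_self (u v : E3) :
    ⟪cross3 u v, cross3 u v⟫ = ⟪u, u⟫ * ⟪v, v⟫ - ⟪u, v⟫ ^ 2 := by
  simp only [inner_eq3]
  simp [cross3]
  ring

lemma HasDerivAt.cross3 {u v : ℝ → E3} {u' v' : E3} {s : ℝ}
    (hu : HasDerivAt u u' s) (hv : HasDerivAt v v' s) :
    HasDerivAt (fun x => cross3 (u x) (v x)) (cross3 u' (v s) + cross3 (u s) v') s := by
  have hu' : ∀ i, HasDerivAt (fun x => u x i) (u' i) s := fun i =>
    (EuclideanSpace.proj (𝕜 := ℝ) i).hasFDerivAt.comp_hasDerivAt s hu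
  have hv' : ∀ i, HasDerivAt (fun x => v x i) (v' i) s := fun i =>
    (EuclideanSpace.proj (𝕜 := ℝ) i).hasFDerivAt.comp_hasDerivAt s hv
  have key : HasDerivAt (fun x => WithLp.ofLp (_root_.cross3 (u x) (v x)))
      (WithLp.ofLp (_root_.cross3 u' (v s) + _root_.cross3 (u s) v')) s := by
    rw [hasDerivAt_pi]
    intro i
    fin_cases i
    · refine (((hu' 1).mul (hv' 2)).sub ((hu' 2).mul (hv' 1))).congr_deriv ?_
      simp [_root_.cross3]; ring
    · refine (((hu' 2).mul (hv' 0)).sub ((hu' 0).mul (hv' 2))).congr_deriv ?_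
      simp [_root_.cross3]; ring
    · refine (((hu' 0).mul (hv' 1)).sub ((hu' 1).mul (hv' 0))).congr_deriv ?_
      simp [_root_.cross3]; ring
  exact (PiLp.continuousLinearEquiv 2 ℝ (fun _ : Fin 3 => ℝ)).symm.hasFDerivAt.comp_hasDerivAt s key

lemma cross3_cross3_left {t n : E3} (htt : ⟪t, t⟫ = 1) (htn : ⟪t, n⟫ = 0) :
    cross3 (cross3 t n) t = n := by
  rw [cross3_anticomm, cross3_cross3, htt, htn]; module

lemma cross3_cross3_right {t n : E3} (hnn : ⟪n, n⟫ = 1) (htn : ⟪t, n⟫ = 0) :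
    cross3 (cross3 t n) n = -t := by
  rw [cross3_anticomm, cross3_cross3, hnn, real_inner_comm, htn]; module

/-- Expansion of a vector in the orthonormal basis `t, n, t × n`. -/
lemma expand_frame {t n : E3} (htt : ⟪t, t⟫ = 1) (hnn : ⟪n, n⟫ = 1) (htn : ⟪t, n⟫ = 0) (v : E3) :
    v = ⟪v, t⟫ • t + ⟪v, n⟫ • n + ⟪v, cross3 t n⟫ • cross3 t n := by
  have hbb : ⟪cross3 t n, cross3 t n⟫ = 1 := by
    rw [inner_cross3_self, htt, hnn, htn]; norm_num
  have hbv : cross3 (cross3 t n) v = ⟪v, t⟫ • n + (-⟪v, n⟫) • t := by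
    rw [cross3_anticomm, cross3_cross3]; module
  -- `b × (b × v) = ⟪b, v⟫ b - v` for the unit vector `b = t × n`.
  have h1 := cross3_cross3 (cross3 t n) (cross3 t n) v
  rw [hbv, hbb, cross3_add_right, cross3_smul_right, cross3_smul_right,
    cross3_cross3_left htt htn, cross3_cross3_right hnn htn, real_inner_comm v (cross3 t n)] at h1
  linear_combination (norm := module) h1

/-- Pythagoras in the orthonormal basis `t, n, t × n`. -/
lemma norm_frame {t n : E3} (htt : ⟪t, t⟫ = 1) (hnn : ⟪n, n⟫ = 1) (htn : ⟪t, n⟫ = 0)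
    (x y z : ℝ) : ‖x • t + y • n + z • cross3 t n‖ = √(x ^ 2 + y ^ 2 + z ^ 2) := by
  have hbb : ⟪cross3 t n, cross3 t n⟫ = 1 := by
    rw [inner_cross3_self, htt, hnn, htn]; norm_num
  have hnt : ⟪n, t⟫ = 0 := by rw [real_inner_comm]; exact htn
  have hbt : ⟪cross3 t n, t⟫ = 0 := by rw [real_inner_comm]; exact inner_cross3_left t n
  have hbn : ⟪cross3 t n, n⟫ = 0 := by rw [real_inner_comm]; exact inner_cross3_right t n
  rw [norm_eq_sqrt_real_inner]
  congr 1
  simp only [inner_add_left, inner_add_right, real_inner_smul_left, real_inner_smul_right,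
    htt, hnn, htn, hnt, hbb, hbt, hbn, inner_cross3_left, inner_cross3_right]
  ring

lemma normalize_smul {v w : E3} {c r : ℝ} (hv : v = c • w) (hc : 0 < c) (hw : ‖w‖ = r) :
    ‖v‖⁻¹ • v = r⁻¹ • w := by
  rw [hv, norm_smul, hw, Real.norm_of_nonneg hc.le, smul_smul]
  congr 1
  field_simp

/-- A curve of constant unit length is orthogonal to its derivative. -/
lemma inner_deriv_self {v : ℝ → E3} {v' : E3} {s : ℝ} (hv : HasDerivAt v v' s)
    (h : ∀ x, ⟪v x, v x⟫ = 1) : ⟪v s, v'⟫ = 0 := by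
  have h1 := hv.inner ℝ hv
  simp only [h] at h1
  have := h1.unique (hasDerivAt_const s (1 : ℝ))
  rw [real_inner_comm (v s) v'] at this
  linarith

/-- Theorem 4.5 (classical form): the Frenet frame of the normal indicatrix `x_n = n`
is `T_n = (-t + f•b)/√(1+f²)`, `N_n = (σ·(f•t + b)/√(1+f²) - n)/√(1+σ²)`,
`B_n = ((f•t + b)/√(1+f²) + σ•n)/√(1+σ²)`. -/
theorem normal_indicatrix_frenet_frame
    (γ : ℝ → EuclideanSpace ℝ (Fin 3))
    (hγ : ContDiff ℝ (⊤ : ℕ∞) γ)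
    (t n b : ℝ → EuclideanSpace ℝ (Fin 3)) (κ τ : ℝ → ℝ)
    (ht : t = deriv γ)
    (hunit : ∀ s, ‖t s‖ = 1)
    (hκ : κ = fun s => ‖deriv t s‖)
    (hκpos : ∀ s, 0 < κ s)
    (hn : n = fun s => (κ s)⁻¹ • deriv t s)
    (hb : b = fun s => cross3 (t s) (n s))
    (hτ : τ = fun s => ⟪deriv n s, b s⟫)
    (f : ℝ → ℝ) (hf : f = fun s => τ s / κ s)
    (σ : ℝ → ℝ)
    (hσ : σ = fun s => deriv f s / (κ s * (1 + f s ^ 2) ^ ((3 : ℝ) / 2)))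
    (Tn Nn Bn : ℝ → EuclideanSpace ℝ (Fin 3))
    (hTn : Tn = fun s => ‖deriv n s‖⁻¹ • deriv n s)
    (hNn : Nn = fun s => ‖deriv Tn s‖⁻¹ • deriv Tn s)
    (hBn : Bn = fun s => cross3 (Tn s) (Nn s))
    :
    ∀ s : ℝ,
      Tn s = (Real.sqrt (1 + f s ^ 2))⁻¹ • (-(t s) + f s • b s) ∧
      Nn s = (Real.sqrt (1 + σ s ^ 2))⁻¹ •
        (σ s • ((Real.sqrt (1 + f s ^ 2))⁻¹ • (f s • t s + b s)) - n s) ∧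
      Bn s = (Real.sqrt (1 + σ s ^ 2))⁻¹ •
        ((Real.sqrt (1 + f s ^ 2))⁻¹ • (f s • t s + b s) + σ s • n s) := by
  have ht1 : ContDiff ℝ 3 t := by
    have h2 : ContDiff ℝ (3 + 1) γ := hγ.of_le (by norm_cast)
    rw [ht]
    exact (contDiff_succ_iff_deriv.1 h2).2.2
  have ht2 : ContDiff ℝ 2 (deriv t) :=
    (contDiff_succ_iff_deriv.1 (show ContDiff ℝ (2 + 1) t from ht1)).2.2
  have hne : ∀ s, deriv t s ≠ 0 := fun s h => by
    have := hκpos s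
    simp [hκ, h] at this
  have hκC : ContDiff ℝ 2 κ := hκ ▸ ht2.norm ℝ hne
  have hnC : ContDiff ℝ 2 n := hn ▸ (hκC.inv fun s => (hκpos s).ne').smul ht2
  have hn2 : ContDiff ℝ 1 (deriv n) :=
    (contDiff_succ_iff_deriv.1 (show ContDiff ℝ (1 + 1) n from hnC)).2.2
  have htd : ∀ s, HasDerivAt t (κ s • n s) s := fun s => by
    have h := (ht1.differentiable (by norm_num) s).hasDerivAt
    rwa [hn, smul_inv_smul₀ (hκpos s).ne']
  have htt : ∀ s, ⟪t s, t s⟫ = 1 := fun s => by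
    rw [real_inner_self_eq_norm_sq, hunit, one_pow]
  have hnn : ∀ s, ⟪n s, n s⟫ = 1 := fun s => by
    have h : ‖deriv t s‖ = κ s := by rw [hκ]
    rw [real_inner_self_eq_norm_sq, hn]
    dsimp only
    rw [norm_smul, h, norm_inv, Real.norm_of_nonneg (hκpos s).le, inv_mul_cancel₀ (hκpos s).ne',
      one_pow]
  have htn : ∀ s, ⟪t s, n s⟫ = 0 := fun s => by
    have h := inner_deriv_self (htd s) htt
    rw [real_inner_smul_right] at h
    exact (mul_eq_zero.1 h).resolve_left (hκpos s).ne'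
  have hbs : ∀ s, b s = cross3 (t s) (n s) := fun s => by rw [hb]
  have hτs : ∀ s, ⟪deriv n s, b s⟫ = τ s := fun s => by rw [hτ]
  have hnd0 : ∀ s, HasDerivAt n (deriv n s) s := fun s =>
    (hnC.differentiable (by norm_num) s).hasDerivAt
  -- The second Frenet equation.
  have hn' : ∀ s, deriv n s = (-κ s) • t s + τ s • b s := fun s => by
    have h1 : ⟪deriv n s, n s⟫ = 0 := by
      rw [real_inner_comm]; exact inner_deriv_self (hnd0 s) hnn
    have h2 : ⟪deriv n s, t s⟫ = -κ s := by
      have h := (htd s).inner ℝ (hnd0 s)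
      simp only [htn] at h
      have h3 := h.unique (hasDerivAt_const s (0 : ℝ))
      rw [real_inner_smul_left, hnn, real_inner_comm] at h3
      linarith
    have h := expand_frame (htt s) (hnn s) (htn s) (deriv n s)
    rw [h1, h2, ← hbs, hτs] at h
    rw [h]; module
  have htb : ∀ s, cross3 (t s) (b s) = -n s := fun s => by
    rw [cross3_anticomm, hbs, cross3_cross3_left (htt s) (htn s)]
  have hbn : ∀ s, cross3 (b s) (n s) = -t s := fun s => by
    rw [hbs, cross3_cross3_right (hnn s) (htn s)]
  -- The third Frenet equation.
  have hbd : ∀ s, HasDerivAt b ((-τ s) • n s) s := fun s => by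
    have h := (htd s).cross3 (hnd0 s)
    rw [← hb] at h
    refine h.congr_deriv ?_
    rw [hn', cross3_smul_left, cross3_self, cross3_add_right, cross3_smul_right,
      cross3_smul_right, cross3_self, htb]
    module
  have hfs : ∀ s, τ s = f s * κ s := fun s => by
    rw [hf]; exact (div_mul_cancel₀ _ (hκpos s).ne').symm
  have hfd : ∀ s, HasDerivAt f (deriv f s) s := fun s => by
    have h1 : DifferentiableAt ℝ τ s := by
      rw [hτ]
      exact (hn2.differentiable (by norm_num) s).inner ℝ (hbd s).differentiableAt
    have h2 : DifferentiableAt ℝ κ s := hκC.differentiable (by norm_num) s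
    rw [hasDerivAt_deriv_iff, hf]
    exact h1.div h2 (hκpos s).ne'
  have hT : ∀ s, Tn s = (√(1 + f s ^ 2))⁻¹ • (-(t s) + f s • b s) := fun s => by
    rw [hTn]
    refine normalize_smul (c := κ s) ?_ (hκpos s) ?_
    · rw [hn', hfs]; module
    · have h := norm_frame (htt s) (hnn s) (htn s) (-1) 0 (f s)
      rw [← hbs] at h
      convert h using 2
      · module
      · ring
  intro s
  set g := √(1 + f s ^ 2) with hg
  have hgpos : 0 < g := Real.sqrt_pos.2 (by positivity)
  have hg2 : g ^ 2 = 1 + f s ^ 2 := Real.sq_sqrt (by positivity)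
  have hκs := hκpos s
  have hf' : deriv f s = σ s * (κ s * g ^ 3) := by
    have h3 : (1 + f s ^ 2) ^ ((3 : ℝ) / 2) = g ^ 3 := by
      rw [hg, Real.sqrt_eq_rpow, ← Real.rpow_mul_natCast (by positivity)]
      norm_num
    rw [hσ]
    dsimp only
    rw [h3]
    field_simp
  have hTd : deriv Tn s = (κ s * g) • (σ s • (g⁻¹ • (f s • t s + b s)) - n s) := by
    have h1 : HasDerivAt (fun x => √(1 + f x ^ 2)) (f s * deriv f s / g) s := by
      have h0 : HasDerivAt (fun x => 1 + f x ^ 2) (2 * f s * deriv f s) s := by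
        simpa using ((hfd s).fun_pow 2).const_add 1
      refine (h0.sqrt (by positivity)).congr_deriv ?_
      rw [← hg]; field_simp
    have h2 := (h1.inv hgpos.ne').smul ((htd s).neg.add ((hfd s).smul (hbd s)))
    have h3 : HasDerivAt Tn _ s := h2.congr_of_eventuallyEq (Filter.Eventually.of_forall hT)
    rw [h3.deriv]
    simp only [Pi.add_apply, Pi.neg_apply, Pi.smul_apply', Pi.inv_apply, ← hg]
    rw [hf', hfs]
    match_scalars
    · field_simp
      linear_combination hg2
    · field_simp
      linear_combination σ s * hg2
    · field_simp
  have hN : Nn s = (√(1 + σ s ^ 2))⁻¹ • (σ s • (g⁻¹ • (f s • t s + b s)) - n s) := by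
    rw [hNn]
    refine normalize_smul hTd (by positivity) ?_
    have h := norm_frame (htt s) (hnn s) (htn s) (σ s * (g⁻¹ * f s)) (-1) (σ s * g⁻¹)
    rw [← hbs] at h
    convert h using 2
    · module
    · field_simp
      rw [hg2]; ring
  refine ⟨hT s, hN, ?_⟩
  rw [hBn]
  dsimp only
  rw [hN, hT]
  have e : σ s • (g⁻¹ • (f s • t s + b s)) - n s =
    (σ s * g⁻¹ * f s) • t s + (σ s * g⁻¹) • b s + (-1 : ℝ) • n s := by module
  rw [e, ← hg, ← neg_one_smul ℝ (t s)]
  simp only [cross3_smul_left, cross3_smul_right, cross3_add_left, cross3_add_right, cross3_self,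
    htb, hbn, ← hbs, cross3_anticomm (b s) (t s)]
  match_scalars
  · field_simp
    linear_combination -σ s * hg2
  · field_simp
  · field_simp
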